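/- For every real ℓ with 0 < ℓ ≤ 1 and every ρ with 0 ≤ ρ ≤ arcsinh(1/sinh(ℓ/2)), one has ℓ²·cosh²ρ ≤ 5. In particular, ℓ² + ℓ²/sinh²(ℓ/2) ≤ 5. -/

import Mathlib

open Real

/-- For every `0 < ℓ ≤ 1` and every `ρ ∈ [0, arcsinh(1/sinh(ℓ/2))]`, one has
`ℓ²·cosh²ρ ≤ 5`; in particular `ℓ² + ℓ²/sinh²(ℓ/2) ≤ 5`. -/
theorem stmt3 (ℓ : ℝ) (hℓ0 : 0 < ℓ) (hℓ1 : ℓ ≤ 1) :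
    (∀ ρ : ℝ, 0 ≤ ρ → ρ ≤ Real.arsinh (1 / Real.sinh (ℓ / 2)) →
      ℓ ^ 2 * Real.cosh ρ ^ 2 ≤ 5) ∧
    ℓ ^ 2 + ℓ ^ 2 / Real.sinh (ℓ / 2) ^ 2 ≤ 5 := by
  have hs : ℓ / 2 < Real.sinh (ℓ / 2) := Real.self_lt_sinh_iff.mpr (by linarith)
  have hpos : 0 < Real.sinh (ℓ / 2) := by linarith
  have h2 : ℓ ^ 2 + ℓ ^ 2 / Real.sinh (ℓ / 2) ^ 2 ≤ 5 := by
    have h3 : ℓ ^ 2 / Real.sinh (ℓ / 2) ^ 2 ≤ 4 := by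
      rw [div_le_iff₀ (by positivity)]
      nlinarith
    nlinarith
  refine ⟨fun ρ h0 h1 => ?_, h2⟩
  have h4 : Real.sinh ρ ≤ 1 / Real.sinh (ℓ / 2) := by
    have := Real.sinh_le_sinh.mpr h1
    rwa [Real.sinh_arsinh] at this
  have h5 : 0 ≤ Real.sinh ρ := Real.sinh_nonneg_iff.mpr h0
  have h6 : Real.sinh ρ ^ 2 ≤ (1 / Real.sinh (ℓ / 2)) ^ 2 := pow_le_pow_left₀ h5 h4 2
  rw [Real.cosh_sq]
  calc ℓ ^ 2 * (Real.sinh ρ ^ 2 + 1)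
      ≤ ℓ ^ 2 * ((1 / Real.sinh (ℓ / 2)) ^ 2 + 1) := by gcongr
    _ = ℓ ^ 2 + ℓ ^ 2 / Real.sinh (ℓ / 2) ^ 2 := by ring
    _ ≤ 5 := h2
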